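/- Suppose 1 ≤ S < N and let x₀ ∈ X_S with ‖x₀‖₀ = S. Set ξ₀ = min_{k ∈ supp(x₀)} |x₀_k|. Then every measurable unbiased estimator x̂ whose components are square-integrable with respect to P_{x₀} satisfies the Hammersley–Chapman–Robbins-type lower bound ε(x₀; x̂) ≥ S σ² + (N − S − 1) σ² exp(−ξ₀² / σ²). -/

import Mathlib

open MeasureTheory ProbabilityTheory Filter
open scoped ENNReal Classical

/-- The product Gaussian measure `P_x` on `ℝ^N` with mean `x` and variance `σ²` per coordinate. -/
noncomputable def gaussP (N : ℕ) (σ : ℝ) (x : Fin N → ℝ) : Measure (Fin N → ℝ) :=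
  MeasureTheory.Measure.pi fun i => gaussianReal (x i) (Real.toNNReal (σ ^ 2))

/-- The support of `x`: indices with nonzero entries. Its cardinality is `‖x‖₀`. -/
noncomputable def supp {N : ℕ} (x : Fin N → ℝ) : Finset (Fin N) :=
  Finset.univ.filter fun i => x i ≠ 0

/-- The sparse parameter set `X_S = {x : ‖x‖₀ ≤ S}`. -/
def sparseSet (N S : ℕ) : Set (Fin N → ℝ) := {x | (supp x).card ≤ S}

/-- An estimator is unbiased if each component is `P_x`-integrable with mean `x i`
for every `x ∈ X_S`. -/
def Unbiased (N S : ℕ) (σ : ℝ) (est : (Fin N → ℝ) → Fin N → ℝ) : Prop :=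
  ∀ x ∈ sparseSet N S, ∀ i,
    Integrable (fun y => est y i) (gaussP N σ x) ∧
    (∫ y, est y i ∂gaussP N σ x) = x i

/-- The MSE `ε(x; x̂) = ∫ ‖x̂(y) − x‖₂² dP_x(y)`, as an extended real. -/
noncomputable def MSE (N : ℕ) (σ : ℝ) (est : (Fin N → ℝ) → Fin N → ℝ)
    (x : Fin N → ℝ) : ℝ≥0∞ :=
  ∫⁻ y, ENNReal.ofReal (∑ i, (est y i - x i) ^ 2) ∂gaussP N σ x

/-!
In the Gaussian shift model the likelihood ratio `L_h` of mean `x + h` against mean `x` satisfies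
`cov[f, L_h] = E_{x+h} f - E_x f`, so unbiasedness prescribes the covariance of the estimator with
every `L_h` such that `x + h` is sparse. As `L_h L_k` is `exp (h ⬝ᵥ k / σ²)` times a likelihood
ratio, `cov[L_h, L_k] = exp (h ⬝ᵥ k / σ²) - 1`. Cauchy–Schwarz against `L_{h + t eᵢ} - L_h` with
`hᵢ = 0`, in the limit `t → 0`, gives `σ² exp (-‖h‖² / σ²) ≤ Var[x̂ᵢ]`. For `i` in the support of
`x` the means `x + t eᵢ` are sparse and `h = 0` is admissible; for the other `i` one takes the `h`
that cancels the smallest nonzero entry of `x`.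
-/

open scoped Matrix NNReal

lemma sq_covariance_le_variance_mul_variance {Ω : Type*} [MeasurableSpace Ω] {μ : Measure Ω}
    [IsFiniteMeasure μ] {X Y : Ω → ℝ} (hX : MemLp X 2 μ) (hY : MemLp Y 2 μ) :
    cov[X, Y; μ] ^ 2 ≤ Var[X; μ] * Var[Y; μ] := by
  have quadratic_nonneg (t : ℝ) :
      0 ≤ Var[X; μ] * (t * t) + 2 * cov[X, Y; μ] * t + Var[Y; μ] := by
    calc
      0 ≤ Var[t • X + Y; μ] := variance_nonneg _ _
      _ = Var[X; μ] * (t * t) + 2 * cov[X, Y; μ] * t + Var[Y; μ] := by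
        rw [variance_add (hX.const_smul t) hY, variance_smul, covariance_smul_left]
        ring
  have discrim_nonpos := discrim_le_zero quadratic_nonneg
  rw [discrim] at discrim_nonpos
  linarith

lemma pi_withDensity {ι : Type*} [Fintype ι] {X : ι → Type*} [∀ i, MeasurableSpace (X i)]
    (μ : ∀ i, Measure (X i)) [∀ i, IsProbabilityMeasure (μ i)] {f : ∀ i, X i → ℝ≥0∞}
    (hf : ∀ i, Measurable (f i)) [∀ i, SigmaFinite ((μ i).withDensity (f i))] :
    Measure.pi (fun i => (μ i).withDensity (f i)) =
      (Measure.pi μ).withDensity fun y => ∏ i, f i (y i) := by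
  refine Measure.pi_eq fun s hs => ?_
  have indicator_prod (y : ∀ i, X i) :
      (Set.univ.pi s).indicator (fun y => ∏ i, f i (y i)) y =
        ∏ i, (s i).indicator (f i) (y i) := by
    by_cases hy : y ∈ Set.univ.pi s
    · rw [Set.indicator_of_mem hy]
      exact Finset.prod_congr rfl fun i _ => (Set.indicator_of_mem (hy i trivial) _).symm
    · obtain ⟨i, hi⟩ : ∃ i, y i ∉ s i := by simpa using hy
      rw [Set.indicator_of_notMem hy,
        Finset.prod_eq_zero (Finset.mem_univ i) (Set.indicator_of_notMem hi _)]
  have indicator_measurable (i : ι) : Measurable ((s i).indicator (f i)) := (hf i).indicator (hs i)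
  calc
    (Measure.pi μ).withDensity (fun y => ∏ i, f i (y i)) (Set.univ.pi s)
        = ∫⁻ y, ∏ i, (s i).indicator (f i) (y i) ∂Measure.pi μ := by
      rw [withDensity_apply _ (.univ_pi hs), ← lintegral_indicator (.univ_pi hs)]
      exact lintegral_congr indicator_prod
    _ = ∏ i, ∫⁻ y, (s i).indicator (f i) (y i) ∂Measure.pi μ :=
      lintegral_prod_eq_prod_lintegral_of_indepFun _ _
        (iIndepFun_pi fun i => (indicator_measurable i).aemeasurable)
        fun i => (indicator_measurable i).comp (measurable_pi_apply i)
    _ = ∏ i, (μ i).withDensity (f i) (s i) := by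
      refine Finset.prod_congr rfl fun i _ => ?_
      rw [(measurePreserving_eval μ i).lintegral_comp (indicator_measurable i),
        lintegral_indicator (hs i), withDensity_apply _ (hs i)]

lemma one_le_mul_of_forall_le_mul_exp_sub_one {M c : ℝ}
    (h : ∀ s > 0, s ≤ M * (Real.exp (c * s) - 1)) : 1 ≤ M * c := by
  have deriv_at_zero : HasDerivAt (fun s => M * (Real.exp (c * s) - 1)) (M * c) 0 := by
    simpa using ((((hasDerivAt_id (0 : ℝ)).const_mul c).exp).sub_const 1).const_mul M
  refine ge_of_tendsto deriv_at_zero.tendsto_slope_zero_right ?_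
  filter_upwards [self_mem_nhdsWithin] with s hs
  have hs : 0 < s := hs
  simpa [← div_eq_inv_mul, one_le_div hs] using h s hs

lemma gaussianReal_add_eq_withDensity {v : ℝ≥0} (hv : v ≠ 0) (m h : ℝ) :
    gaussianReal (m + h) v = (gaussianReal m v).withDensity
      fun y => ENNReal.ofReal (Real.exp ((h * (y - m) - h * h / 2) / v)) := by
  rw [gaussianReal_of_var_ne_zero _ hv, gaussianReal_of_var_ne_zero _ hv,
    ← withDensity_mul _ (measurable_gaussianPDF _ _) (by fun_prop)]
  congr 1 with y
  rw [Pi.mul_apply, gaussianPDF, gaussianPDF, ← ENNReal.ofReal_mul (gaussianPDFReal_nonneg _ _ _),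
    gaussianPDFReal, gaussianPDFReal, mul_assoc _ (Real.exp _), ← Real.exp_add]
  congr 3
  field_simp
  ring

section GaussianShift

variable {ι : Type*} [Fintype ι] {v : ℝ≥0}

/-- The Gaussian measure on `ι → ℝ` with mean `x` and independent coordinates of variance `v`. -/
noncomputable abbrev gaussianPi (v : ℝ≥0) (x : ι → ℝ) : Measure (ι → ℝ) :=
  Measure.pi fun i => gaussianReal (x i) v

/-- The likelihood ratio at `y` of the mean `x + h` against the mean `x`, for independent Gaussian
coordinates of variance `v`. The means are parametrized by the shift `h` because products of
likelihood ratios then correspond to sums of shifts (`likelihoodRatio_mul`). -/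
noncomputable def likelihoodRatio (v : ℝ≥0) (x h y : ι → ℝ) : ℝ :=
  Real.exp ((h ⬝ᵥ (y - x) - h ⬝ᵥ h / 2) / v)

lemma likelihoodRatio_nonneg (x h y : ι → ℝ) : 0 ≤ likelihoodRatio v x h y :=
  Real.exp_nonneg _

lemma measurable_likelihoodRatio (x h : ι → ℝ) : Measurable (likelihoodRatio v x h) := by
  unfold likelihoodRatio dotProduct
  fun_prop

lemma likelihoodRatio_mul (x h k y : ι → ℝ) :
    likelihoodRatio v x h y * likelihoodRatio v x k y =
      Real.exp (h ⬝ᵥ k / v) * likelihoodRatio v x (h + k) y := by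
  simp only [likelihoodRatio, ← Real.exp_add, add_dotProduct, dotProduct_add, dotProduct_comm k h]
  ring_nf

lemma gaussianPi_add_eq_withDensity (hv : v ≠ 0) (x h : ι → ℝ) :
    gaussianPi v (x + h) =
      (gaussianPi v x).withDensity fun y => ENNReal.ofReal (likelihoodRatio v x h y) := by
  have (i : ι) : SigmaFinite ((gaussianReal (x i) v).withDensity
      fun y => ENNReal.ofReal (Real.exp ((h i * (y - x i) - h i * h i / 2) / v))) := by
    rw [← gaussianReal_add_eq_withDensity hv]
    infer_instance
  simp only [gaussianPi, Pi.add_apply, gaussianReal_add_eq_withDensity hv]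
  rw [pi_withDensity _ fun i => by fun_prop]
  congr 1 with y
  rw [← ENNReal.ofReal_prod_of_nonneg fun i _ => Real.exp_nonneg _, ← Real.exp_sum]
  simp only [likelihoodRatio, dotProduct, Pi.sub_apply, ← Finset.sum_div,
    Finset.sum_sub_distrib]

lemma integral_gaussianPi_add (hv : v ≠ 0) (x h : ι → ℝ) (f : (ι → ℝ) → ℝ) :
    ∫ y, f y ∂gaussianPi v (x + h) = ∫ y, f y * likelihoodRatio v x h y ∂gaussianPi v x := by
  rw [gaussianPi_add_eq_withDensity hv, integral_withDensity_eq_integral_toReal_smul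
    (measurable_likelihoodRatio x h).ennreal_ofReal (ae_of_all _ fun y => ENNReal.ofReal_lt_top)]
  simp only [ENNReal.toReal_ofReal (likelihoodRatio_nonneg _ _ _), smul_eq_mul, mul_comm]

lemma integral_likelihoodRatio (hv : v ≠ 0) (x h : ι → ℝ) :
    ∫ y, likelihoodRatio v x h y ∂gaussianPi v x = 1 := by
  simpa using (integral_gaussianPi_add hv x h fun _ => 1).symm

lemma integral_likelihoodRatio_mul (hv : v ≠ 0) (x h k : ι → ℝ) :
    ∫ y, likelihoodRatio v x h y * likelihoodRatio v x k y ∂gaussianPi v x =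
      Real.exp (h ⬝ᵥ k / v) := by
  simp only [likelihoodRatio_mul, integral_const_mul, integral_likelihoodRatio hv, mul_one]

lemma memLp_two_likelihoodRatio (hv : v ≠ 0) (x h : ι → ℝ) :
    MemLp (likelihoodRatio v x h) 2 (gaussianPi v x) := by
  rw [memLp_two_iff_integrable_sq (measurable_likelihoodRatio x h).aestronglyMeasurable]
  refine .of_integral_ne_zero ?_
  simp only [sq, integral_likelihoodRatio_mul hv]
  exact (Real.exp_pos _).ne'

lemma covariance_likelihoodRatio_right (hv : v ≠ 0) (x h : ι → ℝ) {f : (ι → ℝ) → ℝ}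
    (hf : MemLp f 2 (gaussianPi v x)) :
    cov[f, likelihoodRatio v x h; gaussianPi v x] =
      ∫ y, f y ∂gaussianPi v (x + h) - ∫ y, f y ∂gaussianPi v x := by
  rw [covariance_eq_sub hf (memLp_two_likelihoodRatio hv x h), integral_likelihoodRatio hv,
    mul_one, integral_gaussianPi_add hv]
  rfl

lemma covariance_likelihoodRatio (hv : v ≠ 0) (x h k : ι → ℝ) :
    cov[likelihoodRatio v x h, likelihoodRatio v x k; gaussianPi v x] =
      Real.exp (h ⬝ᵥ k / v) - 1 := by
  rw [covariance_likelihoodRatio_right hv x k (memLp_two_likelihoodRatio hv x h),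
    integral_gaussianPi_add hv, integral_likelihoodRatio_mul hv, integral_likelihoodRatio hv]

lemma variance_likelihoodRatio_sub (hv : v ≠ 0) (x h k : ι → ℝ) :
    Var[likelihoodRatio v x h - likelihoodRatio v x k; gaussianPi v x] =
      Real.exp (h ⬝ᵥ h / v) - 2 * Real.exp (h ⬝ᵥ k / v) + Real.exp (k ⬝ᵥ k / v) := by
  have memLp_two (l : ι → ℝ) := memLp_two_likelihoodRatio hv x l
  rw [variance_sub (memLp_two h) (memLp_two k), ← covariance_self (memLp_two h).aemeasurable,
    ← covariance_self (memLp_two k).aemeasurable]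
  simp only [covariance_likelihoodRatio hv]
  ring

theorem hammersley_chapman_robbins_gaussianPi (hv : v ≠ 0) (x h k : ι → ℝ) {f : (ι → ℝ) → ℝ}
    (hf : MemLp f 2 (gaussianPi v x)) :
    (∫ y, f y ∂gaussianPi v (x + h) - ∫ y, f y ∂gaussianPi v (x + k)) ^ 2 ≤
      Var[f; gaussianPi v x] *
        (Real.exp (h ⬝ᵥ h / v) - 2 * Real.exp (h ⬝ᵥ k / v) + Real.exp (k ⬝ᵥ k / v)) := by
  have memLp_two (l : ι → ℝ) := memLp_two_likelihoodRatio hv x l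
  have covariance_sub : cov[f, likelihoodRatio v x h - likelihoodRatio v x k; gaussianPi v x] =
      ∫ y, f y ∂gaussianPi v (x + h) - ∫ y, f y ∂gaussianPi v (x + k) := by
    rw [covariance_sub_right hf (memLp_two h) (memLp_two k),
      covariance_likelihoodRatio_right hv x h hf, covariance_likelihoodRatio_right hv x k hf]
    ring
  rw [← covariance_sub, ← variance_likelihoodRatio_sub hv]
  exact sq_covariance_le_variance_mul_variance hf ((memLp_two h).sub (memLp_two k))

theorem mul_exp_neg_le_variance_of_integral_add_smul (hv : v ≠ 0) {x h u : ι → ℝ}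
    (hu : h ⬝ᵥ u = 0) {f : (ι → ℝ) → ℝ} (hf : MemLp f 2 (gaussianPi v x)) {c : ℝ}
    (hmean : ∀ t : ℝ, ∫ y, f y ∂gaussianPi v (x + (h + t • u)) = c + t) :
    v * Real.exp (-(h ⬝ᵥ h) / v) ≤ Var[f; gaussianPi v x] * (u ⬝ᵥ u) := by
  set E := Real.exp (h ⬝ᵥ h / v)
  have hcr (t : ℝ) :
      t ^ 2 ≤ Var[f; gaussianPi v x] * E * (Real.exp (u ⬝ᵥ u / v * t ^ 2) - 1) := by
    have shift_bound := hammersley_chapman_robbins_gaussianPi hv x (h + t • u) h hf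
    have mean_at_zero : ∫ y, f y ∂gaussianPi v (x + h) = c := by simpa using hmean 0
    have exponent_sq : (h + t • u) ⬝ᵥ (h + t • u) / v = h ⬝ᵥ h / v + u ⬝ᵥ u / v * t ^ 2 := by
      simp only [add_dotProduct, dotProduct_add, smul_dotProduct, dotProduct_smul, hu,
        dotProduct_comm u h, smul_eq_mul]
      ring
    have exponent_cross : (h + t • u) ⬝ᵥ h / v = h ⬝ᵥ h / v := by
      simp only [add_dotProduct, smul_dotProduct, hu, dotProduct_comm u h, smul_zero, add_zero]
    rw [hmean, mean_at_zero, exponent_sq, exponent_cross, Real.exp_add] at shift_bound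
    linarith
  have one_le : 1 ≤ Var[f; gaussianPi v x] * E * (u ⬝ᵥ u / v) :=
    one_le_mul_of_forall_le_mul_exp_sub_one fun s hs => by
      simpa only [Real.sq_sqrt hs.le] using hcr √s
  calc
    v * Real.exp (-(h ⬝ᵥ h) / v) = v * E⁻¹ * 1 := by rw [neg_div, Real.exp_neg, mul_one]
    _ ≤ v * E⁻¹ * (Var[f; gaussianPi v x] * E * (u ⬝ᵥ u / v)) := by gcongr
    _ = Var[f; gaussianPi v x] * (u ⬝ᵥ u) := by
      have hE : E ≠ 0 := (Real.exp_pos _).ne'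
      field_simp

end GaussianShift

lemma supp_add_single_subset {N : ℕ} (x : Fin N → ℝ) (i : Fin N) (t : ℝ) :
    supp (x + Pi.single i t) ⊆ insert i (supp x) := by
  intro j hj
  by_cases hji : j = i <;> simp_all [supp]

lemma supp_sub_single_self {N : ℕ} (x : Fin N → ℝ) (k : Fin N) :
    supp (x - Pi.single k (x k)) = (supp x).erase k := by
  ext j
  by_cases hjk : j = k <;> simp_all [supp]

lemma add_single_mem_sparseSet {N S : ℕ} {x : Fin N → ℝ} (hx : x ∈ sparseSet N S) {i : Fin N}
    (hi : i ∈ supp x) (t : ℝ) : x + Pi.single i t ∈ sparseSet N S := by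
  refine (Finset.card_le_card (supp_add_single_subset x i t)).trans ?_
  rwa [Finset.insert_eq_of_mem hi]

lemma sub_single_self_add_single_mem_sparseSet {N S : ℕ} {x : Fin N → ℝ} (hx : x ∈ sparseSet N S)
    {k : Fin N} (hk : k ∈ supp x) (i : Fin N) (t : ℝ) :
    x - Pi.single k (x k) + Pi.single i t ∈ sparseSet N S := by
  refine ((Finset.card_le_card (supp_add_single_subset _ i t)).trans
    (Finset.card_insert_le _ _)).trans ?_
  rwa [supp_sub_single_self, Finset.card_erase_add_one hk]

namespace Unbiased

variable {N S : ℕ} {σ : ℝ} {est : (Fin N → ℝ) → Fin N → ℝ} {x : Fin N → ℝ}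

lemma MSE_eq_sum_evariance (hunb : Unbiased N S σ est) (hx : x ∈ sparseSet N S) :
    MSE N σ est x = ∑ i, eVar[fun y => est y i; gaussP N σ x] := by
  have sq_error_aemeasurable (i : Fin N) :
      AEMeasurable (fun y => ENNReal.ofReal ((est y i - x i) ^ 2)) (gaussP N σ x) :=
    (((hunb x hx i).1.aemeasurable.sub_const _).pow_const 2).ennreal_ofReal
  simp only [MSE, evariance_eq_lintegral_ofReal, (hunb x hx _).2,
    ENNReal.ofReal_sum_of_nonneg fun _ _ => sq_nonneg _]
  exact lintegral_finsetSum' _ fun i _ => sq_error_aemeasurable i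

lemma ofReal_mul_exp_neg_le_evariance (hunb : Unbiased N S σ est) (hσ : σ ≠ 0)
    (hx : x ∈ sparseSet N S) {h : Fin N → ℝ} {i : Fin N} (hi : h i = 0)
    (hsparse : ∀ t, x + h + Pi.single i t ∈ sparseSet N S) :
    ENNReal.ofReal (σ ^ 2 * Real.exp (-(h ⬝ᵥ h) / σ ^ 2)) ≤
      eVar[fun y => est y i; gaussP N σ x] := by
  have hv : (σ ^ 2).toNNReal ≠ 0 := (Real.toNNReal_pos.2 (by positivity)).ne'
  have : IsProbabilityMeasure (gaussP N σ x) := by unfold gaussP; infer_instance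
  by_cases hf : MemLp (fun y => est y i) 2 (gaussP N σ x)
  · have mean_shift (t : ℝ) : ∫ y, est y i ∂gaussP N σ (x + (h + t • Pi.single i 1)) = x i + t := by
      have unbiased_at := (hunb _ (hsparse t) i).2
      simpa [← Pi.single_smul, ← add_assoc, hi] using unbiased_at
    have variance_bound := mul_exp_neg_le_variance_of_integral_add_smul hv
      (by simpa using hi : h ⬝ᵥ Pi.single i 1 = 0) hf mean_shift
    rw [Real.coe_toNNReal _ (sq_nonneg σ), single_dotProduct, Pi.single_eq_same, one_mul,
      mul_one] at variance_bound
    rw [← ofReal_variance hf]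
    exact ENNReal.ofReal_le_ofReal variance_bound
  · rw [evariance_eq_top (hunb x hx i).1.aestronglyMeasurable hf]
    exact le_top

lemma ofReal_sq_le_evariance_of_mem_supp (hunb : Unbiased N S σ est) (hσ : σ ≠ 0)
    (hx : x ∈ sparseSet N S) {i : Fin N} (hi : i ∈ supp x) :
    ENNReal.ofReal (σ ^ 2) ≤ eVar[fun y => est y i; gaussP N σ x] := by
  simpa using hunb.ofReal_mul_exp_neg_le_evariance hσ hx (h := 0) (i := i) rfl fun t => by
    simpa using add_single_mem_sparseSet hx hi t

lemma ofReal_sq_mul_exp_le_evariance_of_ne (hunb : Unbiased N S σ est) (hσ : σ ≠ 0)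
    (hx : x ∈ sparseSet N S) {i k : Fin N} (hik : i ≠ k) (hk : k ∈ supp x) :
    ENNReal.ofReal (σ ^ 2 * Real.exp (-x k ^ 2 / σ ^ 2)) ≤
      eVar[fun y => est y i; gaussP N σ x] := by
  simpa [← sq] using hunb.ofReal_mul_exp_neg_le_evariance hσ hx (h := -Pi.single k (x k))
    (by simp [hik]) fun t => by
      simpa only [sub_eq_add_neg] using sub_single_self_add_single_mem_sparseSet hx hk i t

end Unbiased

theorem stmt_3_general (N S : ℕ) (σ : ℝ) (hσ : 0 < σ)
    (x₀ : Fin N → ℝ) (hcard : (supp x₀).card = S) (hne : (supp x₀).Nonempty)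
    (est : (Fin N → ℝ) → Fin N → ℝ) (hunb : Unbiased N S σ est) :
    ENNReal.ofReal ((S : ℝ) * σ ^ 2 + ((N : ℝ) - S) * σ ^ 2 *
        Real.exp (-((supp x₀).inf' hne fun k => |x₀ k|) ^ 2 / σ ^ 2))
      ≤ MSE N σ est x₀ := by
  obtain ⟨k, hk, hmin⟩ := Finset.exists_mem_eq_inf' hne fun k => |x₀ k|
  rw [hmin, sq_abs]
  have hx₀ : x₀ ∈ sparseSet N S := hcard.le
  let bound (i : Fin N) : ℝ :=
    if i ∈ supp x₀ then σ ^ 2 else σ ^ 2 * Real.exp (-x₀ k ^ 2 / σ ^ 2)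
  have sum_bound : ∑ i, bound i =
      S * σ ^ 2 + (N - S) * σ ^ 2 * Real.exp (-x₀ k ^ 2 / σ ^ 2) := by
    have card_compl : ((supp x₀)ᶜ.card : ℝ) = N - S := by
      rw [Finset.card_compl, Fintype.card_fin, Nat.cast_sub (card_finset_fin_le _), hcard]
    simp [bound, Finset.sum_ite, hcard, ← Finset.compl_filter, card_compl, mul_assoc]
  rw [← sum_bound, hunb.MSE_eq_sum_evariance hx₀,
    ENNReal.ofReal_sum_of_nonneg fun i _ => by positivity]
  refine Finset.sum_le_sum fun i _ => ?_
  by_cases hi : i ∈ supp x₀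
  · simpa [bound, hi] using hunb.ofReal_sq_le_evariance_of_mem_supp hσ.ne' hx₀ hi
  · have hik : i ≠ k := (ne_of_mem_of_not_mem hk hi).symm
    simpa [bound, hi] using hunb.ofReal_sq_mul_exp_le_evariance_of_ne hσ.ne' hx₀ hik hk

/-- Hammersley–Chapman–Robbins-type lower bound for `‖x₀‖₀ = S`:
`ε(x₀; x̂) ≥ S σ² + (N − S − 1) σ² exp(−ξ₀²/σ²)` where
`ξ₀ = min_{k ∈ supp(x₀)} |x₀_k|`. -/
theorem stmt_3 (N S : ℕ) (σ : ℝ) (hσ : 0 < σ) (hS : 1 ≤ S) (hSN : S < N)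
    (x₀ : Fin N → ℝ) (hcard : (supp x₀).card = S) (hne : (supp x₀).Nonempty)
    (est : (Fin N → ℝ) → Fin N → ℝ) (hmeas : Measurable est)
    (hunb : Unbiased N S σ est)
    (hsq : ∀ i, Integrable (fun y => (est y i) ^ 2) (gaussP N σ x₀)) :
    ENNReal.ofReal ((S : ℝ) * σ ^ 2 + ((N : ℝ) - S - 1) * σ ^ 2 *
        Real.exp (-((supp x₀).inf' hne fun k => |x₀ k|) ^ 2 / σ ^ 2))
      ≤ MSE N σ est x₀ := by
  refine (ENNReal.ofReal_le_ofReal ?_).trans (stmt_3_general N S σ hσ x₀ hcard hne est hunb)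
  gcongr _ + ?_ * _ * _
  exact sub_le_self _ zero_le_one
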